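/- For every positive integer b, b + s_b(⌊g_b^{−1}(0)⌋) ≥ C_b · b. -/

import Mathlib

open Finset

/-- `G_b(t) := −t/2 + √(bt − t²/4)`. -/
noncomputable def Gf (b : ℕ) (t : ℝ) : ℝ := -t / 2 + Real.sqrt (b * t - t ^ 2 / 4)

/-- `g_b(t) := G_b(t) − G_b(t−1)`. -/
noncomputable def gf (b : ℕ) (t : ℝ) : ℝ := Gf b t - Gf b (t - 1)

/-- `Q(x,Δ,s,δ,i) := x² + (Δ + 2s + δ + i)x + (1+Δ)(s+i)`. -/
noncomputable def Qf (x Δ s δ i : ℝ) : ℝ := x ^ 2 + (Δ + 2 * s + δ + i) * x + (1 + Δ) * (s + i)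

/-- The explicit formula for the inverse of (the restriction of) `g_b`. -/
noncomputable def ginv (b : ℕ) (x : ℝ) : ℝ :=
  2 * b * (1 + 1 / (4 * b) -
    Real.sqrt ((2 * x + 1) ^ 2 / ((2 * x + 1) ^ 2 + 1)) *
      Real.sqrt (1 - ((2 * x + 1) ^ 2 + 1) / (16 * b ^ 2)))

open Classical in
/-- `τ_b(i) = 1` iff `i > 1` and `g_b(i) − ⌊g_b(i)⌋ ≥ 1/2 + (16b/(i−1) − 4)^{−1/2}`. -/
noncomputable def taub (b : ℕ) (i : ℕ) : ℕ :=
  if 1 < i ∧ (1 : ℝ) / 2 + 1 / Real.sqrt (16 * b / ((i : ℝ) - 1) - 4) ≤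
      gf b i - ⌊gf b i⌋ then 1 else 0

/-- `p_b(i) := (Σ_{j=1}^{i} τ_b(j)) mod 2`. -/
noncomputable def pb (b : ℕ) (i : ℕ) : ℕ := (∑ j ∈ Finset.Icc 1 i, taub b j) % 2

/-- `s_b(i) := Σ_{j=1}^{i} ⌊g_b(j)⌋ + Σ_{j=1}^{i} τ_b(j)·p_b(j−1)`. -/
noncomputable def sb (b : ℕ) (i : ℕ) : ℤ :=
  (∑ j ∈ Finset.Icc 1 i, ⌊gf b j⌋) + ∑ j ∈ Finset.Icc 1 i, (taub b j : ℤ) * (pb b (j - 1) : ℤ)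

/-- `φ_{b,a} := 1/2 + (16b/g_b^{−1}(a + 0.5) − 4)^{−1/2}`. -/
noncomputable def phib (b : ℕ) (a : ℕ) : ℝ :=
  1 / 2 + 1 / Real.sqrt (16 * b / ginv b ((a : ℝ) + 0.5) - 4)

/-- The constant `C_b`. -/
noncomputable def Cb (b : ℕ) : ℝ :=
  1 - (1 + (⌊gf b 1⌋ : ℝ)) / (2 * b) +
    ∑ a ∈ Finset.range (⌊gf b 1⌋.toNat),
      (2 - Real.sqrt ((2 * ((a : ℝ) + phib b a) + 1) ^ 2 / ((2 * ((a : ℝ) + phib b a) + 1) ^ 2 + 1))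
         - Real.sqrt ((2 * (a : ℝ) + 3) ^ 2 / ((2 * (a : ℝ) + 3) ^ 2 + 1)))

/-!
For `0 ≤ x ≤ g_b(1)` the number `⌊g_b⁻¹(x)⌋` counts the integers `j ≥ 1` on the decreasing branch of
`g_b` with `x ≤ g_b(j)`. The parity weights in `s_b` select every second `j` with `τ_b(j) = 1`, so
`2 s_b(M) + 1 ≥ Σ_{j ≤ M} (2⌊g_b(j)⌋ + τ_b(j))`. Each summand on the right is at least the number of
`a` with `a + 1 ≤ g_b(j)` plus the number of `a` with `a + φ_{b,a} ≤ g_b(j)`: in the second count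
`a = ⌊g_b(j)⌋` can occur only if the fractional part of `g_b(j)` reaches `φ_{b,a}`, which forces
`τ_b(j) = 1`. Exchanging the order of counting leaves `Σ_a (⌊g_b⁻¹(a + 1)⌋ + ⌊g_b⁻¹(a + φ_{b,a})⌋)`,
and dropping the second square root in `g_b⁻¹` bounds each summand from below by `2b` times the
matching summand of `C_b`, minus `1`.
-/

section General

lemma le_sqrt_sub_sqrt_iff {p q c : ℝ} (hq : 0 ≤ q) (hqp : q ≤ p) (hc : 0 ≤ c)
    (hcpq : c ^ 2 ≤ p + q) : c ≤ √p - √q ↔ 4 * (p * q) ≤ (p + q - c ^ 2) ^ 2 := by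
  have hp : 0 ≤ p := hq.trans hqp
  have hsq : (√p - √q) ^ 2 = p + q - 2 * √(p * q) := by
    rw [sub_sq, Real.sq_sqrt hp, Real.sq_sqrt hq, Real.sqrt_mul hp]
    ring
  calc c ≤ √p - √q
      ↔ c ^ 2 ≤ (√p - √q) ^ 2 := (sq_le_sq₀ hc (sub_nonneg.2 (Real.sqrt_le_sqrt hqp))).symm
    _ ↔ 2 * √(p * q) ≤ p + q - c ^ 2 := by rw [hsq]; constructor <;> intro h <;> linarith
    _ ↔ (2 * √(p * q)) ^ 2 ≤ (p + q - c ^ 2) ^ 2 :=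
        (sq_le_sq₀ (by positivity) (sub_nonneg.2 hcpq)).symm
    _ ↔ 4 * (p * q) ≤ (p + q - c ^ 2) ^ 2 := by
        rw [mul_pow, Real.sq_sqrt (mul_nonneg hp hq)]
        norm_num

lemma sum_mul_parity_eq_half {f : ℕ → ℕ} (hf : ∀ j, f j ≤ 1) (n : ℕ) :
    ∑ j ∈ Icc 1 n, f j * ((∑ i ∈ Icc 1 (j - 1), f i) % 2) = (∑ j ∈ Icc 1 n, f j) / 2 := by
  induction n with
  | zero => simp
  | succ n ih =>
    rw [sum_Icc_succ_top (by lia), sum_Icc_succ_top (by lia), ih, Nat.add_sub_cancel]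
    rcases Nat.le_one_iff_eq_zero_or_eq_one.1 (hf (n + 1)) with h | h <;> rw [h] <;> lia

lemma card_filter_add_one_le (K : ℕ) (y : ℝ) : #{a ∈ range K | ((a : ℕ) : ℝ) + 1 ≤ y} ≤ ⌊y⌋₊ := by
  have hsub : {a ∈ range K | ((a : ℕ) : ℝ) + 1 ≤ y} ⊆ range ⌊y⌋₊ := by
    intro a ha
    have hle : ((a + 1 : ℕ) : ℝ) ≤ y := by exact_mod_cast (mem_filter.1 ha).2
    exact mem_range.2 (Nat.le_floor hle)
  simpa using card_le_card hsub

end General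

section Inverse

variable {b : ℕ} {x t : ℝ}

lemma gf_one (b : ℕ) : gf b 1 = √(b - 1 / 4) - 1 / 2 := by
  norm_num [gf, Gf]
  ring

lemma gf_one_nonneg (hb : 0 < b) : 0 ≤ gf b 1 := by
  have hb' : (1 : ℝ) ≤ b := by exact_mod_cast hb
  rw [gf_one, sub_nonneg]
  exact Real.le_sqrt_of_sq_le (by linarith)

lemma zero_mem_Icc_gf_one (hb : 0 < b) : (0 : ℝ) ∈ Set.Icc 0 (gf b 1) :=
  ⟨le_rfl, gf_one_nonneg hb⟩

lemma sq_two_mul_add_one_add_one_le (hx : x ∈ Set.Icc 0 (gf b 1)) :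
    (2 * x + 1) ^ 2 + 1 ≤ 4 * b := by
  have hx0 := hx.1
  have hle : x + 1 / 2 ≤ √(b - 1 / 4) := by linarith [hx.2, gf_one b]
  linarith [(Real.le_sqrt' (by linarith)).1 hle]

lemma one_le_of_mem_Icc_gf_one (hx : x ∈ Set.Icc 0 (gf b 1)) : (1 : ℝ) ≤ b := by
  have hpos : (0 : ℝ) < b := by linarith [sq_two_mul_add_one_add_one_le hx, sq_nonneg (2 * x + 1)]
  exact_mod_cast hpos

lemma ginv_eq (hb : 0 < b) (x : ℝ) :
    ginv b x = 2 * b + 1 / 2 - 2 * b * (√((2 * x + 1) ^ 2 / ((2 * x + 1) ^ 2 + 1)) *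
      √(1 - ((2 * x + 1) ^ 2 + 1) / (16 * b ^ 2))) := by
  rw [ginv]
  field_simp
  ring

lemma ginv_le_two_mul_add_half (hb : 0 < b) (x : ℝ) : ginv b x ≤ 2 * b + 1 / 2 := by
  rw [ginv_eq hb, sub_le_self_iff]
  positivity

lemma sq_axis_sub_ginv (hx : x ∈ Set.Icc 0 (gf b 1)) :
    4 * ((2 * x + 1) ^ 2 + 1) * (2 * b + 1 / 2 - ginv b x) ^ 2 =
      (2 * x + 1) ^ 2 * (16 * b ^ 2 - ((2 * x + 1) ^ 2 + 1)) := by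
  have hb' := one_le_of_mem_Icc_gf_one hx
  have hrad : 0 ≤ 1 - ((2 * x + 1) ^ 2 + 1) / (16 * (b : ℝ) ^ 2) := by
    rw [sub_nonneg, div_le_one (by positivity)]
    nlinarith [sq_two_mul_add_one_add_one_le hx]
  rw [ginv_eq (by exact_mod_cast hb'), sub_sub_cancel, mul_pow, mul_pow,
    mul_pow, Real.sq_sqrt (by positivity), Real.sq_sqrt hrad]
  field_simp
  ring

lemma ginv_le_two_mul (hx : x ∈ Set.Icc 0 (gf b 1)) : ginv b x ≤ 2 * b := by
  have hb' := one_le_of_mem_Icc_gf_one hx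
  have hx0 := hx.1
  have hy := sq_two_mul_add_one_add_one_le hx
  have hsq := sq_axis_sub_ginv hx
  have haxis := ginv_le_two_mul_add_half (by exact_mod_cast hb') x
  have hy1 : 1 ≤ (2 * x + 1) ^ 2 := one_le_pow₀ (by linarith)
  have hprod : (2 * x + 1) ^ 2 + 1 ≤
      (2 * x + 1) ^ 2 * (16 * b ^ 2 - ((2 * x + 1) ^ 2 + 1)) := by
    nlinarith
  have hone : (1 / 2) ^ 2 ≤ (2 * b + 1 / 2 - ginv b x) ^ 2 := by
    rw [← hsq] at hprod
    nlinarith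
  linarith [(sq_le_sq₀ (by norm_num) (sub_nonneg.2 haxis)).1 hone]

/-- Since `g_b(t) + 1/2` is a difference `√p - √q`, two squarings turn the comparison with `x + 1/2`
into a quadratic inequality in the distance from `t` to the axis `2b + 1/2`. -/
lemma le_gf_iff (hx : x ∈ Set.Icc 0 (gf b 1)) (ht : t ∈ Set.Icc 1 (2 * (b : ℝ) + 1 / 2)) :
    x ≤ gf b t ↔ (2 * x + 1) ^ 2 * (16 * b ^ 2 - ((2 * x + 1) ^ 2 + 1)) ≤
      4 * ((2 * x + 1) ^ 2 + 1) * (2 * b + 1 / 2 - t) ^ 2 := by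
  have hb' := one_le_of_mem_Icc_gf_one hx
  have hy := sq_two_mul_add_one_add_one_le hx
  have hx0 := hx.1
  obtain ⟨ht1, ht2⟩ := ht
  set p : ℝ := b * t - t ^ 2 / 4 with hp
  set q : ℝ := b * (t - 1) - (t - 1) ^ 2 / 4 with hq
  have hq0 : 0 ≤ q := by
    rw [hq]
    nlinarith
  have hqp : q ≤ p := by linarith
  have hxpq : (x + 1 / 2) ^ 2 ≤ p + q := by nlinarith
  have hdiff : 16 * ((p + q - (x + 1 / 2) ^ 2) ^ 2 - 4 * (p * q)) =
      4 * ((2 * x + 1) ^ 2 + 1) * (2 * b + 1 / 2 - t) ^ 2 -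
        (2 * x + 1) ^ 2 * (16 * b ^ 2 - ((2 * x + 1) ^ 2 + 1)) := by
    rw [hp, hq]
    ring
  calc x ≤ gf b t
      ↔ x + 1 / 2 ≤ √p - √q := by
        rw [gf, Gf, Gf, ← hp, ← hq]
        constructor <;> intro h <;> linarith
    _ ↔ 4 * (p * q) ≤ (p + q - (x + 1 / 2) ^ 2) ^ 2 :=
        le_sqrt_sub_sqrt_iff hq0 hqp (by linarith) hxpq
    _ ↔ _ := by constructor <;> intro h <;> linarith

lemma le_ginv_iff (hx : x ∈ Set.Icc 0 (gf b 1)) (ht : t ∈ Set.Icc 1 (2 * (b : ℝ) + 1 / 2)) :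
    t ≤ ginv b x ↔ x ≤ gf b t := by
  have hb' := one_le_of_mem_Icc_gf_one hx
  have haxis := ginv_le_two_mul_add_half (by exact_mod_cast hb') x
  calc t ≤ ginv b x
      ↔ 2 * b + 1 / 2 - ginv b x ≤ 2 * b + 1 / 2 - t := (sub_le_sub_iff_left _).symm
    _ ↔ (2 * b + 1 / 2 - ginv b x) ^ 2 ≤ (2 * b + 1 / 2 - t) ^ 2 :=
        (sq_le_sq₀ (sub_nonneg.2 haxis) (sub_nonneg.2 ht.2)).symm
    _ ↔ 4 * ((2 * x + 1) ^ 2 + 1) * (2 * b + 1 / 2 - ginv b x) ^ 2 ≤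
          4 * ((2 * x + 1) ^ 2 + 1) * (2 * b + 1 / 2 - t) ^ 2 :=
        (mul_le_mul_iff_of_pos_left (by positivity)).symm
    _ ↔ x ≤ gf b t := by rw [sq_axis_sub_ginv hx, le_gf_iff hx ht]

lemma one_le_ginv (hx : x ∈ Set.Icc 0 (gf b 1)) : 1 ≤ ginv b x := by
  have hb' := one_le_of_mem_Icc_gf_one hx
  exact (le_ginv_iff hx ⟨le_rfl, by linarith⟩).2 hx.2

lemma antitoneOn_ginv (b : ℕ) : AntitoneOn (ginv b) (Set.Icc 0 (gf b 1)) := by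
  intro x hx y hy hxy
  have hmem : ginv b y ∈ Set.Icc 1 (2 * (b : ℝ) + 1 / 2) :=
    ⟨one_le_ginv hy, by linarith [ginv_le_two_mul hy]⟩
  exact (le_ginv_iff hx hmem).2 (hxy.trans ((le_ginv_iff hy hmem).1 le_rfl))

/-- The limit of `g_b⁻¹(x) / (2b)` as `b → ∞`. Each summand of `C_b` is the sum of two of its
values. -/
noncomputable def limProfile (x : ℝ) : ℝ := 1 - √((2 * x + 1) ^ 2 / ((2 * x + 1) ^ 2 + 1))

lemma mul_limProfile_add_half_le_ginv (hb : 0 < b) (x : ℝ) :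
    2 * b * limProfile x + 1 / 2 ≤ ginv b x := by
  have hrad : √(1 - ((2 * x + 1) ^ 2 + 1) / (16 * (b : ℝ) ^ 2)) ≤ 1 :=
    Real.sqrt_le_one.2 (sub_le_self _ (by positivity))
  have hmul := mul_le_mul_of_nonneg_left
    (mul_le_of_le_one_right (Real.sqrt_nonneg ((2 * x + 1) ^ 2 / ((2 * x + 1) ^ 2 + 1))) hrad)
    (by positivity : (0 : ℝ) ≤ 2 * b)
  rw [ginv_eq hb, limProfile]
  linarith

lemma mul_limProfile_sub_half_le_floor_ginv (hb : 0 < b) (x : ℝ) :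
    2 * b * limProfile x - 1 / 2 ≤ ⌊ginv b x⌋₊ := by
  linarith [mul_limProfile_add_half_le_ginv hb x, Nat.lt_floor_add_one (ginv b x)]

lemma Cb_eq (hb : 0 < b) :
    Cb b = 1 - (1 + (⌊gf b 1⌋₊ : ℝ)) / (2 * b) +
      ∑ a ∈ range ⌊gf b 1⌋₊, (limProfile (a + 1) + limProfile (a + phib b a)) := by
  rw [Cb, Int.floor_toNat, ← natCast_floor_eq_intCast_floor (gf_one_nonneg hb)]
  congr 1
  refine sum_congr rfl fun a _ ↦ ?_
  rw [limProfile, limProfile, show 2 * ((a : ℝ) + 1) + 1 = 2 * a + 3 by ring]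
  ring

end Inverse

section Threshold

variable {b a : ℕ}

/-- The threshold for fractional parts underlying both `τ_b` and `φ_b`: its value at `t = i - 1`
decides `τ_b(i)`, and its value at `t = g_b⁻¹(a + 0.5)` is `φ_{b,a}`. -/
noncomputable def threshold (b : ℕ) (t : ℝ) : ℝ := 1 / 2 + 1 / √(16 * b / t - 4)

lemma phib_eq_threshold (b a : ℕ) : phib b a = threshold b (ginv b (a + 0.5)) := rfl

lemma half_le_threshold (b : ℕ) (t : ℝ) : 1 / 2 ≤ threshold b t :=
  le_add_of_nonneg_right (by positivity)

lemma monotoneOn_threshold (b : ℕ) : MonotoneOn (threshold b) (Set.Ioo 0 (4 * b)) := by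
  intro s hs t ht hst
  have hs0 := hs.1
  have ht0 := ht.1
  have hrad : 0 < 16 * b / t - 4 := by
    rw [sub_pos, lt_div_iff₀ ht0]
    linarith [ht.2]
  unfold threshold
  gcongr

lemma threshold_le_one {t : ℝ} (ht0 : 0 < t) (ht : t ≤ 2 * b) : threshold b t ≤ 1 := by
  have hrad : 2 ≤ √(16 * b / t - 4) := by
    refine Real.le_sqrt_of_sq_le ?_
    have h8 : 8 ≤ 16 * b / t := by
      rw [le_div_iff₀ ht0]
      linarith
    linarith
  have hinv : 1 / √(16 * b / t - 4) ≤ 1 / 2 := one_div_le_one_div_of_le two_pos hrad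
  rw [threshold]
  linarith

lemma add_mem_Icc_gf_one {ψ : ℝ} (ha : a < ⌊gf b 1⌋₊) (hψ : ψ ∈ Set.Icc 0 1) :
    a + ψ ∈ Set.Icc 0 (gf b 1) := by
  have hle : ((a + 1 : ℕ) : ℝ) ≤ gf b 1 := (Nat.le_floor_iff' a.succ_ne_zero).1 ha
  push_cast at hle
  exact ⟨add_nonneg a.cast_nonneg hψ.1, by linarith [hψ.2]⟩

lemma phib_mem_Icc (ha : a < ⌊gf b 1⌋₊) : phib b a ∈ Set.Icc (1 / 2) 1 := by
  have hmid : (a : ℝ) + 0.5 ∈ Set.Icc 0 (gf b 1) := add_mem_Icc_gf_one ha (by norm_num)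
  exact ⟨half_le_threshold b _,
    threshold_le_one (by linarith [one_le_ginv hmid]) (ginv_le_two_mul hmid)⟩

lemma add_phib_mem_Icc_gf_one (ha : a < ⌊gf b 1⌋₊) : a + phib b a ∈ Set.Icc 0 (gf b 1) :=
  add_mem_Icc_gf_one ha (Set.Icc_subset_Icc_left (by norm_num) (phib_mem_Icc ha))

lemma taub_le_one (b j : ℕ) : taub b j ≤ 1 := by
  unfold taub
  split_ifs <;> simp

lemma taub_eq_one_of_threshold_le {j : ℕ} (hj : 1 < j)
    (h : threshold b (j - 1) ≤ Int.fract (gf b j)) : taub b j = 1 :=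
  if_pos ⟨hj, h⟩

end Threshold

section Counting

variable {b j : ℕ}

lemma natCast_mem_Icc_axis (hb : 0 < b) (hj : j ∈ Icc 1 ⌊ginv b 0⌋₊) :
    (j : ℝ) ∈ Set.Icc 1 (2 * (b : ℝ) + 1 / 2) := by
  obtain ⟨hj1, hj2⟩ := mem_Icc.1 hj
  have hle : (j : ℝ) ≤ ginv b 0 := (Nat.le_floor_iff' (by lia)).1 hj2
  exact ⟨by exact_mod_cast hj1, hle.trans (ginv_le_two_mul_add_half hb 0)⟩

lemma gf_nonneg (hb : 0 < b) (hj : j ∈ Icc 1 ⌊ginv b 0⌋₊) : 0 ≤ gf b j := by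
  obtain ⟨hj1, hj2⟩ := mem_Icc.1 hj
  exact (le_ginv_iff (zero_mem_Icc_gf_one hb) (natCast_mem_Icc_axis hb hj)).1
    ((Nat.le_floor_iff' (by lia)).1 hj2)

lemma card_filter_le_gf {x : ℝ} (hx : x ∈ Set.Icc 0 (gf b 1)) :
    #{j ∈ Icc 1 ⌊ginv b 0⌋₊ | x ≤ gf b (j : ℕ)} = ⌊ginv b x⌋₊ := by
  have hb : 0 < b := by exact_mod_cast one_le_of_mem_Icc_gf_one hx
  have hfloor : ⌊ginv b x⌋₊ ≤ ⌊ginv b 0⌋₊ :=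
    Nat.floor_mono (antitoneOn_ginv b (zero_mem_Icc_gf_one hb) hx hx.1)
  have hfilter : {j ∈ Icc 1 ⌊ginv b 0⌋₊ | x ≤ gf b (j : ℕ)} = Icc 1 ⌊ginv b x⌋₊ := by
    ext j
    have hiff : j ∈ Icc 1 ⌊ginv b 0⌋₊ → (j ≤ ⌊ginv b x⌋₊ ↔ x ≤ gf b j) := fun hj ↦ by
      rw [← le_ginv_iff hx (natCast_mem_Icc_axis hb hj),
        Nat.le_floor_iff' (Nat.one_le_iff_ne_zero.1 (mem_Icc.1 hj).1)]
    simp only [mem_filter, mem_Icc] at hiff ⊢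
    constructor
    · rintro ⟨hj, hxj⟩
      exact ⟨hj.1, (hiff hj).2 hxj⟩
    · rintro ⟨hj1, hj2⟩
      exact ⟨⟨hj1, hj2.trans hfloor⟩, (hiff ⟨hj1, hj2.trans hfloor⟩).1 hj2⟩
  rw [hfilter, Nat.card_Icc, Nat.add_sub_cancel]

lemma sum_floor_ginv_eq_sum_card {ι : Type*} {s : Finset ι} {x : ι → ℝ}
    (hx : ∀ a ∈ s, x a ∈ Set.Icc 0 (gf b 1)) :
    ∑ a ∈ s, ⌊ginv b (x a)⌋₊ = ∑ j ∈ Icc 1 ⌊ginv b 0⌋₊, #{a ∈ s | x a ≤ gf b (j : ℕ)} := by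
  rw [← sum_congr rfl fun a ha ↦ card_filter_le_gf (hx a ha)]
  exact sum_card_bipartiteAbove_eq_sum_card_bipartiteBelow fun a j ↦ x a ≤ gf b (j : ℕ)

lemma taub_eq_one_of_add_phib_le (hb : 0 < b) (hj : j ∈ Icc 1 ⌊ginv b 0⌋₊)
    (hfloor : ⌊gf b j⌋₊ < ⌊gf b 1⌋₊)
    (hphi : ⌊gf b j⌋₊ + phib b ⌊gf b j⌋₊ ≤ gf b j) : taub b j = 1 := by
  have haxis := natCast_mem_Icc_axis hb hj
  set a := ⌊gf b j⌋₊ with ha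
  have hj1 : 1 < j := by
    refine lt_of_le_of_ne (mem_Icc.1 hj).1 ?_
    rintro rfl
    simp [ha] at hfloor
  have hj1' : (1 : ℝ) < j := by exact_mod_cast hj1
  have hmid : (a : ℝ) + 0.5 ∈ Set.Icc 0 (gf b 1) := add_mem_Icc_gf_one hfloor (by norm_num)
  have hjmid : (j : ℝ) ≤ ginv b (a + 0.5) := by
    rw [le_ginv_iff hmid haxis]
    norm_num
    linarith [(phib_mem_Icc hfloor).1]
  have h2b := ginv_le_two_mul hmid
  have hthreshold : threshold b (j - 1) ≤ phib b a := by
    rw [phib_eq_threshold]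
    exact monotoneOn_threshold b ⟨by linarith, by linarith⟩ ⟨by linarith, by linarith⟩
      (by linarith)
  refine taub_eq_one_of_threshold_le hj1 (hthreshold.trans ?_)
  rw [Int.fract, ← natCast_floor_eq_intCast_floor (gf_nonneg hb hj)]
  linarith

lemma card_filter_add_phib_le_gf (hb : 0 < b) (hj : j ∈ Icc 1 ⌊ginv b 0⌋₊) :
    #{a ∈ range ⌊gf b 1⌋₊ | a + phib b a ≤ gf b j} ≤ ⌊gf b j⌋₊ + taub b j := by
  have hsub : {a ∈ range ⌊gf b 1⌋₊ | a + phib b a ≤ gf b j} ⊆ range (⌊gf b j⌋₊ + taub b j) := by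
    intro a hmem
    obtain ⟨ha, hphi⟩ := mem_filter.1 hmem
    rw [mem_range] at ha ⊢
    have hle : a ≤ ⌊gf b j⌋₊ := Nat.le_floor (by linarith [(phib_mem_Icc ha).1])
    rcases hle.lt_or_eq with hlt | rfl
    · exact hlt.trans_le (Nat.le_add_right _ _)
    · simp [taub_eq_one_of_add_phib_le hb hj ha hphi]
  simpa using card_le_card hsub

lemma sum_floor_add_taub_le_sb (b n : ℕ) :
    ∑ j ∈ Icc 1 n, (2 * ⌊gf b j⌋ + (taub b j : ℤ)) ≤ 2 * sb b n + 1 := by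
  have hparity := sum_mul_parity_eq_half (taub_le_one b) n
  have hsb : sb b n = ∑ j ∈ Icc 1 n, ⌊gf b j⌋ + ((∑ j ∈ Icc 1 n, taub b j) / 2 : ℕ) := by
    rw [← hparity, sb]
    push_cast [pb]
    rfl
  rw [hsb, sum_add_distrib, ← mul_sum, ← Nat.cast_sum]
  lia

lemma sum_floor_ginv_le_sb (hb : 0 < b) :
    ∑ a ∈ range ⌊gf b 1⌋₊, ((⌊ginv b (a + 1)⌋₊ : ℤ) + ⌊ginv b (a + phib b a)⌋₊) ≤
      2 * sb b ⌊ginv b 0⌋₊ + 1 := by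
  have hone : ∀ a ∈ range ⌊gf b 1⌋₊, (a : ℝ) + 1 ∈ Set.Icc 0 (gf b 1) := fun a ha ↦
    add_mem_Icc_gf_one (mem_range.1 ha) (by norm_num)
  have hphi : ∀ a ∈ range ⌊gf b 1⌋₊, a + phib b a ∈ Set.Icc 0 (gf b 1) := fun a ha ↦
    add_phib_mem_Icc_gf_one (mem_range.1 ha)
  refine le_trans ?_ (sum_floor_add_taub_le_sb b _)
  rw [sum_add_distrib, ← Nat.cast_sum, ← Nat.cast_sum, sum_floor_ginv_eq_sum_card hone,
    sum_floor_ginv_eq_sum_card hphi, ← Nat.cast_add, ← sum_add_distrib, Nat.cast_sum]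
  refine sum_le_sum fun j hj ↦ ?_
  rw [← Int.natCast_floor_eq_floor (gf_nonneg hb hj)]
  push_cast
  linarith [card_filter_add_one_le ⌊gf b 1⌋₊ (gf b j), card_filter_add_phib_le_gf hb hj]

end Counting

/-- `b + s_b(⌊g_b^{−1}(0)⌋) ≥ C_b·b`. -/
theorem sb_ge_Cb (b : ℕ) (hb : 0 < b) :
    (b : ℝ) + (sb b (⌊ginv b 0⌋.toNat) : ℝ) ≥ Cb b * b := by
  set K := ⌊gf b 1⌋₊
  have hcount : ∑ a ∈ range K, ((⌊ginv b (a + 1)⌋₊ : ℝ) + ⌊ginv b (a + phib b a)⌋₊) ≤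
      2 * sb b ⌊ginv b 0⌋₊ + 1 := by
    exact_mod_cast sum_floor_ginv_le_sb hb
  have hfloor : ∑ a ∈ range K, (2 * b * (limProfile (a + 1) + limProfile (a + phib b a)) - 1) ≤
      ∑ a ∈ range K, ((⌊ginv b (a + 1)⌋₊ : ℝ) + ⌊ginv b (a + phib b a)⌋₊) :=
    sum_le_sum fun a _ ↦ by
      linarith [mul_limProfile_sub_half_le_floor_ginv hb (a + 1),
        mul_limProfile_sub_half_le_floor_ginv hb (a + phib b a)]
  rw [sum_sub_distrib, ← mul_sum, sum_const, card_range, nsmul_one] at hfloor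
  have hCb : Cb b * b = b - (1 + K) / 2 +
      b * ∑ a ∈ range K, (limProfile (a + 1) + limProfile (a + phib b a)) := by
    rw [Cb_eq hb]
    field_simp
    ring
  rw [hCb, Int.floor_toNat]
  linarith
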